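/- arXiv:2312.07145 — 4 statements merged into one kernel-verified Lean document; each statement's English description precedes it below -/
import Mathlib

section
/- Let p be a positive integer and g : ℝ^p → ℝ be continuously differentiable with locally Lipschitz gradient. Suppose g attains its infimum g* = inf_θ g(θ) and let Θ* = {θ : g(θ) = g*} be the (nonempty) set of global minimizers. If g satisfies the Polyak–Łojasiewicz (PL) condition with constant μ > 0, i.e. for all θ ∈ ℝ^p, g(θ) − g* ≤ (1/(2μ))‖∇g(θ)‖₂², then g satisfies the Quadratic Growth (QG) condition with the same constant: for all θ ∈ ℝ^p, g(θ) − g* ≥ (μ/2)·dist(θ, Θ*)², where dist(θ, Θ*) = inf_{θ* ∈ Θ*} ‖θ − θ*‖₂. -/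
open scoped RealInnerProductSpace

/-!
Put `h = √(g - g*)`. Wherever `g > g*`, the chain rule gives `h' = g' / (2 h)`, so the PL inequality
says exactly that `‖h'‖ ≥ √(μ / 2)`. For `c < √(μ / 2)`, Ekeland's variational principle produces
from any `θ` a point `z` with `h z + c ‖z - θ‖ ≤ h θ` which minimizes `y ↦ h y + c ‖y - z‖`. If
`h z > 0`, minimality would give `‖h' z‖ ≤ c < √(μ / 2)`; so `z` is a zero of `h` within `h θ / c`
of `θ`. Let `c` tend to `√(μ / 2)` and square.
-/

open Filter Metric Set Topology

section Ekeland

/-- The points below `x` in Ekeland's order, in which `y` precedes `x` when passing from `x` to `y`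
decreases `f` by at least `c` times the distance travelled. -/
def ekelandSet {X : Type*} [PseudoMetricSpace X] (f : X → ℝ) (c : ℝ) (x : X) : Set X :=
  {y | f y + c * dist y x ≤ f x}

section PseudoMetricSpace

variable {X : Type*} [PseudoMetricSpace X] {f : X → ℝ} {c : ℝ} {x y : X}

theorem self_mem_ekelandSet : x ∈ ekelandSet f c x := by
  simp [ekelandSet]

theorem ekelandSet_subset_of_mem (hc : 0 ≤ c) (hy : y ∈ ekelandSet f c x) :
    ekelandSet f c y ⊆ ekelandSet f c x := fun z hz ↦ calc
  f z + c * dist z x ≤ f z + c * (dist z y + dist y x) := by gcongr; exact dist_triangle z y x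
  _ = f z + c * dist z y + c * dist y x := by ring
  _ ≤ f y + c * dist y x := by gcongr; exact hz
  _ ≤ f x := hy

theorem isClosed_ekelandSet (hf : LowerSemicontinuous f) : IsClosed (ekelandSet f c x) :=
  (hf.add (by fun_prop : Continuous fun y ↦ c * dist y x).lowerSemicontinuous).isClosed_preimage
    (f x)

theorem exists_mem_ekelandSet_subset_closedBall (hf : BddBelow (range f)) (hc : 0 < c) (x : X)
    {r : ℝ} (hr : 0 < r) :
    ∃ y ∈ ekelandSet f c x, ekelandSet f c y ⊆ closedBall y r := by
  have hne : (f '' ekelandSet f c x).Nonempty := ⟨_, mem_image_of_mem f self_mem_ekelandSet⟩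
  obtain ⟨_, ⟨y, hy, rfl⟩, hlt⟩ := Real.lt_sInf_add_pos hne (mul_pos hc hr)
  refine ⟨y, hy, fun z hz ↦ ?_⟩
  have hinf : sInf (f '' ekelandSet f c x) ≤ f z :=
    csInf_le (hf.mono (image_subset_range f _))
      (mem_image_of_mem f (ekelandSet_subset_of_mem hc.le hy hz))
  have hdecrease : f z + c * dist z y ≤ f y := hz
  exact le_of_mul_le_mul_left (by linarith) hc

end PseudoMetricSpace

variable {X : Type*} [MetricSpace X] [CompleteSpace X] {f : X → ℝ} {c : ℝ}

theorem exists_mem_ekelandSet_eq_singleton (hf : LowerSemicontinuous f)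
    (hbdd : BddBelow (range f)) (hc : 0 < c) (x : X) :
    ∃ z ∈ ekelandSet f c x, ekelandSet f c z = {z} := by
  choose next hnext hball using fun (n : ℕ) (y : X) ↦
    exists_mem_ekelandSet_subset_closedBall hbdd hc y (pow_pos (one_half_pos (α := ℝ)) n)
  let u : ℕ → X := fun n ↦ n.rec x next
  let S : ℕ → Set X := fun n ↦ ekelandSet f c (u (n + 1))
  have hu : Antitone fun n ↦ ekelandSet f c (u n) :=
    antitone_nat_of_succ_le fun n ↦ ekelandSet_subset_of_mem hc.le (hnext n (u n))
  have hS : Antitone S := fun m n hmn ↦ hu (Nat.succ_le_succ hmn)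
  have hsub : ∀ n, S n ⊆ closedBall (u (n + 1)) ((1 / 2) ^ n) := fun n ↦ hball n (u n)
  have hbounded : ∀ n, Bornology.IsBounded (S n) := fun n ↦ isBounded_closedBall.subset (hsub n)
  have hdiam_le : ∀ n, diam (S n) ≤ 2 * (1 / 2) ^ n := fun n ↦
    (diam_mono (hsub n) isBounded_closedBall).trans (diam_closedBall (by positivity))
  have hdiam : Tendsto (fun n ↦ diam (S n)) atTop (𝓝 0) :=
    squeeze_zero (fun _ ↦ diam_nonneg) hdiam_le <| by
      simpa using (tendsto_pow_atTop_nhds_zero_of_lt_one (r := (1 / 2 : ℝ))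
        (by norm_num) (by norm_num)).const_mul 2
  obtain ⟨z, hz⟩ : (⋂ n, S n).Nonempty :=
    nonempty_iInter_of_nonempty_biInter (fun _ ↦ isClosed_ekelandSet hf) hbounded
      (fun N ↦ ⟨u (N + 1), mem_iInter₂.2 fun _ hn ↦ hS hn self_mem_ekelandSet⟩) hdiam
  have hzS : ∀ n, z ∈ S n := mem_iInter.1 hz
  refine ⟨z, hu (Nat.zero_le 1) (hzS 0), Subset.antisymm (fun y hy ↦ ?_)
    (singleton_subset_iff.2 self_mem_ekelandSet)⟩
  have hdist : ∀ n, dist y z ≤ diam (S n) := fun n ↦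
    dist_le_diam_of_mem (hbounded n) (ekelandSet_subset_of_mem hc.le (hzS n) hy) (hzS n)
  exact dist_le_zero.1 (ge_of_tendsto' hdiam hdist)

theorem ekeland_variational_principle (hf : LowerSemicontinuous f) (hbdd : BddBelow (range f))
    (hc : 0 < c) (x : X) :
    ∃ z, f z + c * dist z x ≤ f x ∧ ∀ y ≠ z, f z < f y + c * dist y z := by
  obtain ⟨z, hzx, hz⟩ := exists_mem_ekelandSet_eq_singleton hf hbdd hc x
  refine ⟨z, hzx, fun y hyz ↦ lt_of_not_ge fun hy ↦ hyz ?_⟩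
  exact hz.subset (show y ∈ ekelandSet f c z from hy)

end Ekeland

section NormedSpace

variable {E : Type*} [NormedAddCommGroup E] [NormedSpace ℝ E] {f : E → ℝ} {c : ℝ} {x : E}

theorem neg_mul_norm_le_of_isLocalMin_add_mul_dist {f' : StrongDual ℝ E} (hf : HasFDerivAt f f' x)
    (hmin : IsLocalMin (fun y ↦ f y + c * dist y x) x) (v : E) : -(c * ‖v‖) ≤ f' v := by
  have hline : Tendsto (fun t : ℝ ↦ x + t • v) (𝓝[>] 0) (𝓝 x) :=
    tendsto_nhdsWithin_of_tendsto_nhds <| Continuous.tendsto' (by fun_prop) _ _ (by simp)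
  refine ge_of_tendsto (hf.hasLineDerivAt v).tendsto_slope_zero_right ?_
  filter_upwards [self_mem_nhdsWithin, hline.eventually hmin] with t (ht : 0 < t) hle
  have hle : f x ≤ f (x + t • v) + c * (t * ‖v‖) := by
    simpa [norm_smul, abs_of_pos ht] using hle
  rw [smul_eq_mul, inv_mul_eq_div, le_div_iff₀ ht]
  linarith

theorem norm_fderiv_le_of_isLocalMin_add_mul_dist (hc : 0 ≤ c)
    (hmin : IsLocalMin (fun y ↦ f y + c * dist y x) x) : ‖fderiv ℝ f x‖ ≤ c := by
  by_cases hf : DifferentiableAt ℝ f x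
  · have hlower := neg_mul_norm_le_of_isLocalMin_add_mul_dist hf.hasFDerivAt hmin
    refine ContinuousLinearMap.opNorm_le_bound _ hc fun v ↦ abs_le.2 ⟨hlower v, ?_⟩
    simpa using hlower (-v)
  · simpa [fderiv_zero_of_not_differentiableAt hf] using hc

theorem sqrt_half_le_norm_fderiv_sqrt {μ : ℝ} (hμ : 0 < μ) (hpos : 0 < f x)
    (hPL : f x ≤ 1 / (2 * μ) * ‖fderiv ℝ f x‖ ^ 2) :
    √(μ / 2) ≤ ‖fderiv ℝ (fun y ↦ √(f y)) x‖ := by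
  -- `fderiv` is zero where `f` is not differentiable, which the PL inequality rules out at `x`.
  have hf : DifferentiableAt ℝ f x := by
    by_contra hf
    simp only [fderiv_zero_of_not_differentiableAt hf, norm_zero] at hPL
    linarith
  rw [fderiv_sqrt hf hpos.ne', norm_smul, Real.norm_of_nonneg (by positivity)]
  refine Real.sqrt_le_iff.2 ⟨by positivity, ?_⟩
  calc μ / 2 ≤ ‖fderiv ℝ f x‖ ^ 2 / (4 * f x) := by
        rw [one_div, inv_mul_eq_div, le_div_iff₀ (by positivity)] at hPL
        rw [le_div_iff₀ (by positivity)]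
        linarith
    _ = (1 / (2 * √(f x)) * ‖fderiv ℝ f x‖) ^ 2 := by
        rw [mul_pow, div_pow, mul_pow, Real.sq_sqrt hpos.le]
        ring

variable [CompleteSpace E]

theorem exists_eq_zero_and_mul_dist_le (hf : LowerSemicontinuous f) (hnonneg : ∀ y, 0 ≤ f y)
    (hc : 0 < c) (hslope : ∀ y, 0 < f y → c < ‖fderiv ℝ f y‖) (x : E) :
    ∃ z, f z = 0 ∧ c * dist z x ≤ f x := by
  have hbdd : BddBelow (range f) := ⟨0, forall_mem_range.2 hnonneg⟩
  obtain ⟨z, hzx, hz⟩ := ekeland_variational_principle hf hbdd hc x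
  have hmin : IsLocalMin (fun y ↦ f y + c * dist y z) z := .of_forall fun y ↦ by
    obtain rfl | hyz := eq_or_ne y z
    · rfl
    · simpa using (hz y hyz).le
  have hz0 : f z ≤ 0 := not_lt.1 fun hpos ↦
    (hslope z hpos).not_ge (norm_fderiv_le_of_isLocalMin_add_mul_dist hc.le hmin)
  exact ⟨z, hz0.antisymm (hnonneg z), by linarith [hnonneg z]⟩

theorem nonempty_zeros_and_mul_infDist_le (hf : LowerSemicontinuous f) (hnonneg : ∀ y, 0 ≤ f y)
    {κ : ℝ} (hκ : 0 < κ) (hslope : ∀ y, 0 < f y → κ ≤ ‖fderiv ℝ f y‖) :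
    {z | f z = 0}.Nonempty ∧ ∀ x, κ * infDist x {z | f z = 0} ≤ f x := by
  have hzero : ∀ c ∈ Ioo 0 κ, ∀ x, ∃ z, f z = 0 ∧ c * dist z x ≤ f x := fun c hc ↦
    exists_eq_zero_and_mul_dist_le hf hnonneg hc.1 fun y hy ↦ hc.2.trans_le (hslope y hy)
  refine ⟨?_, fun x ↦ ?_⟩
  · obtain ⟨z, hz, -⟩ := hzero (κ / 2) ⟨half_pos hκ, half_lt_self hκ⟩ 0
    exact ⟨z, hz⟩
  · have hlim : Tendsto (fun c ↦ c * infDist x {z | f z = 0}) (𝓝[<] κ)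
        (𝓝 (κ * infDist x {z | f z = 0})) :=
      tendsto_nhdsWithin_of_tendsto_nhds (tendsto_id.mul_const _)
    refine le_of_tendsto hlim ?_
    filter_upwards [Ioo_mem_nhdsLT hκ] with c hc
    obtain ⟨z, hz, hzx⟩ := hzero c hc x
    calc c * infDist x {z | f z = 0} ≤ c * dist z x := by
          rw [dist_comm]
          exact mul_le_mul_of_nonneg_left (infDist_le_dist_of_mem hz) hc.1.le
      _ ≤ f x := hzx

theorem pl_implies_qg_general {g : E → ℝ} (hg : LowerSemicontinuous g) {μ gstar : ℝ} (hμ : 0 < μ)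
    (hglb : ∀ θ, gstar ≤ g θ)
    (hPL : ∀ θ, g θ - gstar ≤ 1 / (2 * μ) * ‖fderiv ℝ g θ‖ ^ 2) :
    {θ | g θ = gstar}.Nonempty ∧
      ∀ θ, g θ - gstar ≥ μ / 2 * infDist θ {θ' | g θ' = gstar} ^ 2 := by
  let h : E → ℝ := fun θ ↦ √(g θ - gstar)
  have hgap : ∀ θ, 0 ≤ g θ - gstar := fun θ ↦ sub_nonneg.2 (hglb θ)
  have hlsc : LowerSemicontinuous h :=
    (by fun_prop : Continuous fun t ↦ √(t - gstar)).comp_lowerSemicontinuous hg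
      fun _ _ hst ↦ Real.sqrt_le_sqrt (sub_le_sub_right hst gstar)
  have hslope : ∀ θ, 0 < h θ → √(μ / 2) ≤ ‖fderiv ℝ h θ‖ := fun θ hθ ↦
    sqrt_half_le_norm_fderiv_sqrt hμ (Real.sqrt_pos.1 hθ)
      (by simpa only [fderiv_sub_const] using hPL θ)
  have hzeros : {θ | h θ = 0} = {θ | g θ = gstar} := by
    ext θ
    exact (Real.sqrt_eq_zero (hgap θ)).trans sub_eq_zero
  obtain ⟨hne, hdist⟩ := nonempty_zeros_and_mul_infDist_le hlsc (fun θ ↦ Real.sqrt_nonneg _)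
    (Real.sqrt_pos.2 (half_pos hμ)) hslope
  rw [hzeros] at hne hdist
  refine ⟨hne, fun θ ↦ ?_⟩
  calc μ / 2 * infDist θ {θ' | g θ' = gstar} ^ 2
      = (√(μ / 2) * infDist θ {θ' | g θ' = gstar}) ^ 2 := by
        rw [mul_pow, Real.sq_sqrt (half_pos hμ).le]
    _ ≤ h θ ^ 2 := pow_le_pow_left₀ (mul_nonneg (Real.sqrt_nonneg _) infDist_nonneg) (hdist θ) 2
    _ = g θ - gstar := Real.sq_sqrt (hgap θ)

end NormedSpace

theorem norm_gradient_eq_norm_fderiv {F : Type*} [NormedAddCommGroup F] [InnerProductSpace ℝ F]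
    [CompleteSpace F] (f : F → ℝ) (x : F) : ‖gradient f x‖ = ‖fderiv ℝ f x‖ :=
  (InnerProductSpace.toDual ℝ F).symm.norm_map (fderiv ℝ f x)

/-- **PL implies QG.** If a continuously differentiable `g : ℝ^p → ℝ` with locally
Lipschitz gradient attains its infimum `gstar` and satisfies the Polyak–Łojasiewicz
condition with constant `μ > 0`, then it satisfies the Quadratic Growth condition with
the same constant, where the distance is to the set of global minimizers. -/
theorem pl_implies_qg (p : ℕ) (hp : 1 ≤ p)
    (g : EuclideanSpace ℝ (Fin p) → ℝ)
    (hg : ContDiff ℝ 1 g)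
    (hgradLip : LocallyLipschitz (gradient g))
    (μ gstar : ℝ) (hμ : 0 < μ)
    (hglb : ∀ θ, gstar ≤ g θ)
    (hattain : ∃ θ, g θ = gstar)
    (hPL : ∀ θ, g θ - gstar ≤ (1 / (2 * μ)) * ‖gradient g θ‖ ^ 2) :
    ∀ θ, g θ - gstar ≥ (μ / 2) * (Metric.infDist θ {θ' | g θ' = gstar}) ^ 2 := by
  simp only [norm_gradient_eq_norm_fderiv] at hPL
  exact (pl_implies_qg_general hg.continuous.lowerSemicontinuous hμ hglb hPL).2
end

section
/- Let p ≥ 1, T ≥ 1, μ > 0, G ≥ 0, ε ≥ 0, and let L_1, …, L_T : ℝ^p → ℝ be differentiable. Let θ̃ ∈ ℝ^p and let the iterates satisfy θ_{t+1} = θ_t − η_t ∇L_t(θ_t) with step sizes η_t = 4/(μt). Suppose for every t ∈ {1,…,T}: ‖∇L_t(θ_t)‖₂ ≤ G and L_t(θ_t) − L_t(θ̃) ≤ ⟨θ_t − θ̃, ∇L_t(θ_t)⟩ + ε. Then Σ_{t=1}^T [L_t(θ_t) − L_t(θ̃)] ≤ (μ/8)·Σ_{t=1}^T ‖θ_t −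 θ̃‖₂² + (2G²/μ)(1 + ln T) + εT. -/
/-!
Expanding `‖θ_{t+1} - z‖²` turns `⟪θ_t - z, g_t⟫` into a multiple of the decrease of the squared
distance to the comparator `z`, plus `η_t ‖g_t‖² / 2`. Summation by parts leaves the squared
distances weighted by the increments of `1 / η_t`. For `η_t = 4 / (μ t)` these increments all equal
`μ / 4`, and the terms `η_t ‖g_t‖² / 2` are at most `(2 G² / μ) / t`, a harmonic sum.
-/

open scoped RealInnerProductSpace

theorem sum_Icc_one_mul_sub_succ {R : Type*} [CommRing R] (a d : ℕ → R) (T : ℕ) :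
    ∑ t ∈ Finset.Icc 1 T, a t * (d t - d (t + 1)) =
      ∑ t ∈ Finset.Icc 1 T, (a t - a (t - 1)) * d t + a 0 * d 1 - a T * d (T + 1) := by
  induction T with
  | zero => simp
  | succ n ih =>
    rw [Finset.sum_Icc_succ_top (by lia), Finset.sum_Icc_succ_top (by lia), ih,
      Nat.add_sub_cancel]
    ring

section InnerProductSpace

variable {E : Type*} [NormedAddCommGroup E] [InnerProductSpace ℝ E]

theorem real_inner_eq_norm_sq_sub_norm_sub_inv_smul_sq {a : ℝ} (ha : a ≠ 0) (v g : E) :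
    ⟪v, g⟫ = a / 2 * (‖v‖ ^ 2 - ‖v - a⁻¹ • g‖ ^ 2) + a⁻¹ / 2 * ‖g‖ ^ 2 := by
  rw [norm_sub_sq_real, real_inner_smul_right, norm_smul, mul_pow, Real.norm_eq_abs, sq_abs]
  field_simp
  ring

/-- `a t` is the inverse of the step size on round `t ≥ 1`; the value `a 0` is free, and `a 0 = 0`
removes the boundary term of the first round. -/
theorem sum_inner_sub_eq_of_gradient_descent {T : ℕ} {a : ℕ → ℝ} {θ g : ℕ → E}
    (ha : ∀ t ∈ Finset.Icc 1 T, a t ≠ 0)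
    (hθ : ∀ t ∈ Finset.Icc 1 T, θ (t + 1) = θ t - (a t)⁻¹ • g t) (z : E) :
    ∑ t ∈ Finset.Icc 1 T, ⟪θ t - z, g t⟫ =
      ∑ t ∈ Finset.Icc 1 T, (a t - a (t - 1)) / 2 * ‖θ t - z‖ ^ 2
        + ∑ t ∈ Finset.Icc 1 T, (a t)⁻¹ / 2 * ‖g t‖ ^ 2
        + a 0 / 2 * ‖θ 1 - z‖ ^ 2 - a T / 2 * ‖θ (T + 1) - z‖ ^ 2 := by
  have inner_eq : ∀ t ∈ Finset.Icc 1 T, ⟪θ t - z, g t⟫ =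
      a t / 2 * (‖θ t - z‖ ^ 2 - ‖θ (t + 1) - z‖ ^ 2) + (a t)⁻¹ / 2 * ‖g t‖ ^ 2 := fun t ht ↦ by
    rw [hθ t ht, sub_right_comm]
    exact real_inner_eq_norm_sq_sub_norm_sub_inv_smul_sq (ha t ht) _ _
  rw [Finset.sum_congr rfl inner_eq, Finset.sum_add_distrib,
    sum_Icc_one_mul_sub_succ (fun t ↦ a t / 2) (fun t ↦ ‖θ t - z‖ ^ 2)]
  simp only [sub_div]
  ring

theorem sum_inner_sub_le_of_gradient_descent_harmonic {T : ℕ} {μ G : ℝ} (hμ : 0 < μ)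
    {θ g : ℕ → E} (hθ : ∀ t ∈ Finset.Icc 1 T, θ (t + 1) = θ t - (4 / (μ * t)) • g t)
    (hg : ∀ t ∈ Finset.Icc 1 T, ‖g t‖ ≤ G) (z : E) :
    ∑ t ∈ Finset.Icc 1 T, ⟪θ t - z, g t⟫ ≤
      (μ / 8) * ∑ t ∈ Finset.Icc 1 T, ‖θ t - z‖ ^ 2 + (2 * G ^ 2 / μ) * harmonic T := by
  have pos_of_mem : ∀ t ∈ Finset.Icc 1 T, 0 < t := fun t ht ↦ (Finset.mem_Icc.mp ht).1
  have regret_eq := sum_inner_sub_eq_of_gradient_descent (a := fun t ↦ μ * t / 4)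
    (fun t ht ↦ by have := pos_of_mem t ht; positivity)
    (fun t ht ↦ by rw [inv_div]; exact hθ t ht) z
  have distance_sum : ∑ t ∈ Finset.Icc 1 T, (μ * t / 4 - μ * (t - 1 : ℕ) / 4) / 2 * ‖θ t - z‖ ^ 2 =
      (μ / 8) * ∑ t ∈ Finset.Icc 1 T, ‖θ t - z‖ ^ 2 := by
    rw [Finset.mul_sum]
    refine Finset.sum_congr rfl fun t ht ↦ ?_
    rw [Nat.cast_pred (pos_of_mem t ht)]
    ring
  have gradient_sum : ∑ t ∈ Finset.Icc 1 T, (μ * t / 4)⁻¹ / 2 * ‖g t‖ ^ 2 ≤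
      (2 * G ^ 2 / μ) * harmonic T := by
    rw [harmonic_eq_sum_Icc, Rat.cast_sum, Finset.mul_sum]
    refine Finset.sum_le_sum fun t ht ↦ ?_
    calc (μ * t / 4)⁻¹ / 2 * ‖g t‖ ^ 2 ≤ (μ * t / 4)⁻¹ / 2 * G ^ 2 := by gcongr; exact hg t ht
      _ = 2 * G ^ 2 / μ * ((t : ℚ)⁻¹ : ℚ) := by push_cast; rw [inv_div]; ring
  have final_distance : 0 ≤ μ * T / 4 / 2 * ‖θ (T + 1) - z‖ ^ 2 := by positivity
  rw [regret_eq, distance_sum, Nat.cast_zero]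
  linarith

theorem ogd_summed_bound_general {T : ℕ} {μ G ε : ℝ} (hμ : 0 < μ) {L : ℕ → E → ℝ} {z : E}
    {θ g : ℕ → E} (hθ : ∀ t ∈ Finset.Icc 1 T, θ (t + 1) = θ t - (4 / (μ * t)) • g t)
    (hg : ∀ t ∈ Finset.Icc 1 T, ‖g t‖ ≤ G)
    (hL : ∀ t ∈ Finset.Icc 1 T, L t (θ t) - L t z ≤ ⟪θ t - z, g t⟫ + ε) :
    ∑ t ∈ Finset.Icc 1 T, (L t (θ t) - L t z) ≤
      (μ / 8) * ∑ t ∈ Finset.Icc 1 T, ‖θ t - z‖ ^ 2 + (2 * G ^ 2 / μ) * harmonic T + ε * T :=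
  calc ∑ t ∈ Finset.Icc 1 T, (L t (θ t) - L t z)
      ≤ ∑ t ∈ Finset.Icc 1 T, (⟪θ t - z, g t⟫ + ε) := Finset.sum_le_sum hL
    _ = ∑ t ∈ Finset.Icc 1 T, ⟪θ t - z, g t⟫ + ε * T := by
      simp [Finset.sum_add_distrib, mul_comm]
    _ ≤ _ := by gcongr; exact sum_inner_sub_le_of_gradient_descent_harmonic hμ hθ hg z

end InnerProductSpace

/-- **Summed OGD bound.** With step sizes `η_t = 4/(μ t)`, gradient bounds `G`, and
almost-convexity with error `ε` on every round `t ∈ {1, …, T}`, the cumulative excess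
loss of online gradient descent against a comparator `θtil` satisfies
`Σ_{t=1}^T (L_t(θ_t) - L_t(θtil)) ≤ (μ/8) Σ ‖θ_t - θtil‖² + (2G²/μ)(1 + ln T) + εT`. -/
theorem ogd_summed_bound (p T : ℕ) (hp : 1 ≤ p) (hT : 1 ≤ T)
    (μ G ε : ℝ) (hμ : 0 < μ) (hG : 0 ≤ G) (hε : 0 ≤ ε)
    (L : ℕ → EuclideanSpace ℝ (Fin p) → ℝ) (hL : ∀ t, Differentiable ℝ (L t))
    (θtil : EuclideanSpace ℝ (Fin p)) (θ : ℕ → EuclideanSpace ℝ (Fin p))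
    (hupd : ∀ t ∈ Finset.Icc 1 T,
      θ (t + 1) = θ t - (4 / (μ * t)) • gradient (L t) (θ t))
    (hgradbd : ∀ t ∈ Finset.Icc 1 T, ‖gradient (L t) (θ t)‖ ≤ G)
    (hac : ∀ t ∈ Finset.Icc 1 T,
      L t (θ t) - L t θtil ≤ ⟪θ t - θtil, gradient (L t) (θ t)⟫ + ε) :
    ∑ t ∈ Finset.Icc 1 T, (L t (θ t) - L t θtil)
      ≤ (μ / 8) * ∑ t ∈ Finset.Icc 1 T, ‖θ t - θtil‖ ^ 2
        + (2 * G ^ 2 / μ) * (1 + Real.log T) + ε * T := by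
  refine (ogd_summed_bound_general hμ hupd hgradbd hac).trans ?_
  gcongr
  exact harmonic_le_one_add_log T
end

section
/- Let p ≥ 1, T ≥ 1, μ > 0, G ≥ 0, ε ≥ 0, and let L_1, …, L_T : ℝ^p → ℝ be nonnegative differentiable functions, each with a unique global minimizer θ_t* satisfying the QG inequality L_t(θ) − L_t(θ_t*) ≥ (μ/2)‖θ − θ_t*‖₂² for all θ ∈ ℝ^p. Let θ* ∈ ℝ^p be any comparator, and let the iterates satisfy θ_{t+1} = θ_t − η_t∇L_t(θ_t) with η_t = 4/(μt). Suppose for every t ∈ {1,…,T}: ‖∇L_t(θ_t)‖₂ ≤ G and L_t(θ_t) − L_t(θ*) ≤ ⟨θ_t − θ*, ∇L_t(θ_t)⟩ + ε. Then the regret satisfies Σ_{t=1}^T L_t(θ_t) − Σ_{t=1}^T L_t(θ*) ≤ 2·Σ_{t=1}^T L_t(θ*) + (4G²/μ)(1 + ln T) + 2εT. -/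
open scoped RealInnerProductSpace

/-!
For `0 ≤ f`, quadratic growth yields `μ / 4 * ‖x - y‖ ^ 2 ≤ f x + f y` by passing from `x` to `y`
through the minimizer. On the other side, steps `1 / (α t)` make the squared distances to the
comparator telescope after weighting by `α t`, so the linearized regret exceeds
`α / 2 * ∑ ‖θ t - u‖ ^ 2` by at most a logarithmic term. With `α = μ / 4` the surplus of squared
distances is absorbed by the losses themselves; this costs the extra `2 * ∑ L t u` in the regret.
-/

/-- The quadratic growth (QG) inequality with constant `μ` relative to `x₀`. That `x₀` is a
minimizer is not part of the definition: it follows when `0 ≤ μ`. -/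
def HasQuadraticGrowth {E : Type*} [SeminormedAddCommGroup E] (μ : ℝ) (f : E → ℝ) (x₀ : E) :
    Prop :=
  ∀ x, μ / 2 * ‖x - x₀‖ ^ 2 ≤ f x - f x₀

section QuadraticGrowth

variable {E : Type*} [SeminormedAddCommGroup E]

theorem norm_sub_sq_le_two_mul_add (x y z : E) :
    ‖x - y‖ ^ 2 ≤ 2 * (‖x - z‖ ^ 2 + ‖y - z‖ ^ 2) :=
  calc
    ‖x - y‖ ^ 2 ≤ (‖x - z‖ + ‖y - z‖) ^ 2 := by
      gcongr
      rw [norm_sub_rev y z]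
      exact norm_sub_le_norm_sub_add_norm_sub x z y
    _ ≤ 2 * (‖x - z‖ ^ 2 + ‖y - z‖ ^ 2) := add_sq_le

theorem HasQuadraticGrowth.mul_norm_sub_sq_le_add {μ : ℝ} {f : E → ℝ} {x₀ : E}
    (hf : HasQuadraticGrowth μ f x₀) (hμ : 0 ≤ μ) (hf₀ : 0 ≤ f x₀) (x y : E) :
    μ / 4 * ‖x - y‖ ^ 2 ≤ f x + f y :=
  calc
    μ / 4 * ‖x - y‖ ^ 2 ≤ μ / 4 * (2 * (‖x - x₀‖ ^ 2 + ‖y - x₀‖ ^ 2)) := by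
      gcongr
      exact norm_sub_sq_le_two_mul_add x y x₀
    _ = μ / 2 * ‖x - x₀‖ ^ 2 + μ / 2 * ‖y - x₀‖ ^ 2 := by ring
    _ ≤ f x + f y := by linarith [hf x, hf y]

end QuadraticGrowth

theorem sum_Icc_inv_le_one_add_log (n : ℕ) :
    ∑ t ∈ Finset.Icc 1 n, (t : ℝ)⁻¹ ≤ 1 + Real.log n := by
  simpa only [harmonic_eq_sum_Icc, Rat.cast_sum, Rat.cast_inv, Rat.cast_natCast]
    using harmonic_le_one_add_log n

section GradientSteps

variable {E : Type*} [SeminormedAddCommGroup E] [InnerProductSpace ℝ E]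

theorem norm_sub_smul_sub_sq (η : ℝ) (x g u : E) :
    ‖x - η • g - u‖ ^ 2 = ‖x - u‖ ^ 2 - 2 * η * ⟪x - u, g⟫ + η ^ 2 * ‖g‖ ^ 2 := by
  rw [sub_right_comm, norm_sub_sq_real, real_inner_smul_right, norm_smul, mul_pow,
    Real.norm_eq_abs, sq_abs]
  ring

theorem two_mul_inner_add_inv_mul_norm_sq {η : ℝ} (hη : η ≠ 0) (x g u : E) :
    2 * ⟪x - u, g⟫ + η⁻¹ * ‖x - η • g - u‖ ^ 2 = η⁻¹ * ‖x - u‖ ^ 2 + η * ‖g‖ ^ 2 := by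
  rw [norm_sub_smul_sub_sq]
  field_simp
  ring

variable {T : ℕ} {α : ℝ} {θ g : ℕ → E}

theorem two_mul_sum_inner_add_mul_norm_sq (hα : α ≠ 0)
    (hθ : ∀ t ∈ Finset.Icc 1 T, θ (t + 1) = θ t - (α * t)⁻¹ • g t) (u : E) :
    2 * ∑ t ∈ Finset.Icc 1 T, ⟪θ t - u, g t⟫ + α * T * ‖θ (T + 1) - u‖ ^ 2
      = α * ∑ t ∈ Finset.Icc 1 T, ‖θ t - u‖ ^ 2
        + α⁻¹ * ∑ t ∈ Finset.Icc 1 T, (t : ℝ)⁻¹ * ‖g t‖ ^ 2 := by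
  induction T with
  | zero => simp
  | succ n ih =>
    have hη : (α * (n + 1 : ℕ))⁻¹ ≠ 0 := by positivity
    have last_step := two_mul_inner_add_inv_mul_norm_sq hη (θ (n + 1)) (g (n + 1)) u
    rw [← hθ (n + 1) (by simp), inv_inv, mul_inv] at last_step
    have first_steps := ih fun t ht => hθ t (Finset.Icc_subset_Icc_right n.le_succ ht)
    simp only [Finset.sum_Icc_succ_top (Nat.le_add_left 1 n)]
    push_cast at last_step ⊢
    linear_combination first_steps + last_step

theorem two_mul_sum_inner_le {G : ℝ} (hα : 0 < α)
    (hθ : ∀ t ∈ Finset.Icc 1 T, θ (t + 1) = θ t - (α * t)⁻¹ • g t)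
    (hg : ∀ t ∈ Finset.Icc 1 T, ‖g t‖ ≤ G) (u : E) :
    2 * ∑ t ∈ Finset.Icc 1 T, ⟪θ t - u, g t⟫
      ≤ α * ∑ t ∈ Finset.Icc 1 T, ‖θ t - u‖ ^ 2 + G ^ 2 / α * (1 + Real.log T) := by
  have sum_norm_sq_le :
      ∑ t ∈ Finset.Icc 1 T, (t : ℝ)⁻¹ * ‖g t‖ ^ 2 ≤ G ^ 2 * (1 + Real.log T) :=
    calc
      ∑ t ∈ Finset.Icc 1 T, (t : ℝ)⁻¹ * ‖g t‖ ^ 2 ≤ ∑ t ∈ Finset.Icc 1 T, (t : ℝ)⁻¹ * G ^ 2 := by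
        gcongr with t ht
        exact hg t ht
      _ = G ^ 2 * ∑ t ∈ Finset.Icc 1 T, (t : ℝ)⁻¹ := by rw [← Finset.sum_mul, mul_comm]
      _ ≤ G ^ 2 * (1 + Real.log T) := by
        gcongr
        exact sum_Icc_inv_le_one_add_log T
  calc
    2 * ∑ t ∈ Finset.Icc 1 T, ⟪θ t - u, g t⟫
        ≤ 2 * ∑ t ∈ Finset.Icc 1 T, ⟪θ t - u, g t⟫ + α * T * ‖θ (T + 1) - u‖ ^ 2 :=
      le_add_of_nonneg_right (by positivity)
    _ = α * ∑ t ∈ Finset.Icc 1 T, ‖θ t - u‖ ^ 2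
          + α⁻¹ * ∑ t ∈ Finset.Icc 1 T, (t : ℝ)⁻¹ * ‖g t‖ ^ 2 :=
      two_mul_sum_inner_add_mul_norm_sq hα.ne' hθ u
    _ ≤ α * ∑ t ∈ Finset.Icc 1 T, ‖θ t - u‖ ^ 2 + α⁻¹ * (G ^ 2 * (1 + Real.log T)) := by gcongr
    _ = α * ∑ t ∈ Finset.Icc 1 T, ‖θ t - u‖ ^ 2 + G ^ 2 / α * (1 + Real.log T) := by ring

-- `g t` plays the role of an `ε`-subgradient of `L t` at `θ t`, tested only against `u`.
theorem qg_regret_bound_general {μ G ε : ℝ} (hμ : 0 < μ) {L : ℕ → E → ℝ} {θmin : ℕ → E}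
    (hL₀ : ∀ t ∈ Finset.Icc 1 T, 0 ≤ L t (θmin t))
    (hL : ∀ t ∈ Finset.Icc 1 T, HasQuadraticGrowth μ (L t) (θmin t))
    (hθ : ∀ t ∈ Finset.Icc 1 T, θ (t + 1) = θ t - (4 / (μ * t)) • g t)
    (hg : ∀ t ∈ Finset.Icc 1 T, ‖g t‖ ≤ G) (u : E)
    (hgL : ∀ t ∈ Finset.Icc 1 T, L t (θ t) - L t u ≤ ⟪θ t - u, g t⟫ + ε) :
    ∑ t ∈ Finset.Icc 1 T, L t (θ t) - ∑ t ∈ Finset.Icc 1 T, L t u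
      ≤ 2 * ∑ t ∈ Finset.Icc 1 T, L t u + (4 * G ^ 2 / μ) * (1 + Real.log T) + 2 * ε * T := by
  have regret_le_linearized : ∑ t ∈ Finset.Icc 1 T, L t (θ t) - ∑ t ∈ Finset.Icc 1 T, L t u
      ≤ ∑ t ∈ Finset.Icc 1 T, ⟪θ t - u, g t⟫ + T * ε := by
    simpa [Finset.sum_add_distrib] using Finset.sum_le_sum hgL
  have linearized_le : 2 * ∑ t ∈ Finset.Icc 1 T, ⟪θ t - u, g t⟫
      ≤ μ / 4 * ∑ t ∈ Finset.Icc 1 T, ‖θ t - u‖ ^ 2 + G ^ 2 / (μ / 4) * (1 + Real.log T) := by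
    refine two_mul_sum_inner_le (by positivity) (fun t ht => ?_) hg u
    rw [hθ t ht, div_mul_eq_mul_div, inv_div]
  have distances_le_losses : μ / 4 * ∑ t ∈ Finset.Icc 1 T, ‖θ t - u‖ ^ 2
      ≤ ∑ t ∈ Finset.Icc 1 T, L t (θ t) + ∑ t ∈ Finset.Icc 1 T, L t u := by
    rw [Finset.mul_sum, ← Finset.sum_add_distrib]
    exact Finset.sum_le_sum fun t ht =>
      (hL t ht).mul_norm_sub_sq_le_add hμ.le (hL₀ t ht) (θ t) u
  have coefficient_eq : G ^ 2 / (μ / 4) = 4 * G ^ 2 / μ := by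
    rw [div_div_eq_mul_div, mul_comm]
  rw [coefficient_eq] at linearized_le
  linarith

end GradientSteps

/-- **Regret bound under the QG condition.** For nonnegative differentiable losses
`L_t`, each with a unique global minimizer `θmin t` satisfying the quadratic growth
inequality with constant `μ > 0`, online gradient descent with step sizes
`η_t = 4/(μ t)`, gradient bounds `G`, and almost-convexity error `ε` satisfies
`Σ L_t(θ_t) - Σ L_t(θstar) ≤ 2 Σ L_t(θstar) + (4G²/μ)(1 + ln T) + 2εT`. -/
theorem qg_regret_bound (p T : ℕ) (hp : 1 ≤ p) (hT : 1 ≤ T)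
    (μ G ε : ℝ) (hμ : 0 < μ) (hG : 0 ≤ G) (hε : 0 ≤ ε)
    (L : ℕ → EuclideanSpace ℝ (Fin p) → ℝ)
    (hdiff : ∀ t, Differentiable ℝ (L t))
    (hnonneg : ∀ t ∈ Finset.Icc 1 T, ∀ θ, 0 ≤ L t θ)
    (θmin : ℕ → EuclideanSpace ℝ (Fin p))
    (hmin : ∀ t ∈ Finset.Icc 1 T, ∀ θ, L t (θmin t) ≤ L t θ)
    (huniq : ∀ t ∈ Finset.Icc 1 T, ∀ θ', (∀ θ, L t θ' ≤ L t θ) → θ' = θmin t)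
    (hQG : ∀ t ∈ Finset.Icc 1 T, ∀ θ,
      L t θ - L t (θmin t) ≥ (μ / 2) * ‖θ - θmin t‖ ^ 2)
    (θstar : EuclideanSpace ℝ (Fin p)) (θ : ℕ → EuclideanSpace ℝ (Fin p))
    (hupd : ∀ t ∈ Finset.Icc 1 T,
      θ (t + 1) = θ t - (4 / (μ * t)) • gradient (L t) (θ t))
    (hgradbd : ∀ t ∈ Finset.Icc 1 T, ‖gradient (L t) (θ t)‖ ≤ G)
    (hac : ∀ t ∈ Finset.Icc 1 T,
      L t (θ t) - L t θstar ≤ ⟪θ t - θstar, gradient (L t) (θ t)⟫ + ε) :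
    ∑ t ∈ Finset.Icc 1 T, L t (θ t) - ∑ t ∈ Finset.Icc 1 T, L t θstar
      ≤ 2 * ∑ t ∈ Finset.Icc 1 T, L t θstar
        + (4 * G ^ 2 / μ) * (1 + Real.log T) + 2 * ε * T :=
  qg_regret_bound_general hμ (fun t ht => hnonneg t ht (θmin t)) hQG hupd hgradbd θstar hac
end

section
/- Let p, n ≥ 1, let f_1, …, f_n : ℝ^p → ℝ be differentiable, let y ∈ ℝ^n, and define the empirical squared loss L(θ) = (1/(2n))·Σ_{i=1}^n (y_i − f_i(θ))². Fix θ ∈ ℝ^p and suppose the Gram (neural tangent kernel) matrix K(θ) ∈ ℝ^{n×n} with entries K(θ)_{ij} = ⟨∇f_i(θ), ∇f_j(θ)⟩ satisfies λ_min(K(θ)) ≥ λ0 > 0. Then ‖∇L(θ)‖₂² ≥ (2λ0/n)·L(θ). -/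
open scoped RealInnerProductSpace

/-!
With residuals `r i = y i - f i θ`, the loss `L = c ∑ r i ^ 2` has gradient `-2c ∑ r i • ∇f i`,
whose squared norm is `4c²` times the quadratic form of the Gram matrix `⟪∇f i, ∇f j⟫` at `r`. A
lower bound `λ ∑ r i ^ 2` on this form is `4c²λ ∑ r i ^ 2 = 4cλ L` on the squared norm, and the
choice `c = 1 / (2n)` gives the constant `2λ / n`.
-/

section GradientCalculus

variable {𝕜 F ι : Type*} [RCLike 𝕜] [NormedAddCommGroup F] [InnerProductSpace 𝕜 F]
  [CompleteSpace F] {x : F}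

theorem hasGradientAt_fun_sum {s : Finset ι} {f : ι → F → 𝕜} {f' : ι → F}
    (hf : ∀ i ∈ s, HasGradientAt (f i) (f' i) x) :
    HasGradientAt (fun z => ∑ i ∈ s, f i z) (∑ i ∈ s, f' i) x := by
  rw [hasGradientAt_iff_hasFDerivAt, map_sum]
  exact HasFDerivAt.fun_sum fun i hi => (hf i hi).hasFDerivAt

theorem hasGradientAt_const_mul {f : F → 𝕜} {f' : F} (hf : HasGradientAt f f' x) (c : 𝕜) :
    HasGradientAt (fun z => c * f z) (starRingEnd 𝕜 c • f') x := by
  rw [hasGradientAt_iff_hasFDerivAt, map_smulₛₗ, RCLike.conj_conj]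
  exact hf.hasFDerivAt.const_mul c

theorem hasGradientAt_const_sub_sq {f : F → 𝕜} {f' : F} (hf : HasGradientAt f f' x) (a : 𝕜) :
    HasGradientAt (fun z => (a - f z) ^ 2) (starRingEnd 𝕜 (-2 * (a - f x)) • f') x := by
  rw [hasGradientAt_iff_hasFDerivAt, map_smulₛₗ, RCLike.conj_conj]
  refine ((hf.hasFDerivAt.const_sub a).pow 2).congr_fderiv ?_
  module

end GradientCalculus

theorem hasGradientAt_const_mul_sum_sub_sq {F ι : Type*} [NormedAddCommGroup F]
    [InnerProductSpace ℝ F] [CompleteSpace F] {s : Finset ι} {f : ι → F → ℝ} {f' : ι → F} {x : F}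
    (hf : ∀ i ∈ s, HasGradientAt (f i) (f' i) x) (y : ι → ℝ) (c : ℝ) :
    HasGradientAt (fun z => c * ∑ i ∈ s, (y i - f i z) ^ 2)
      ((-2 * c) • ∑ i ∈ s, (y i - f i x) • f' i) x := by
  have hsum := hasGradientAt_const_mul
    (hasGradientAt_fun_sum fun i hi => hasGradientAt_const_sub_sq (hf i hi) (y i)) c
  convert hsum using 1
  simp only [conj_trivial, Finset.smul_sum, smul_smul]
  exact Finset.sum_congr rfl fun i _ => by ring_nf

theorem norm_sum_smul_sq {E ι : Type*} [SeminormedAddCommGroup E] [InnerProductSpace ℝ E]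
    (s : Finset ι) (a : ι → ℝ) (v : ι → E) :
    ‖∑ i ∈ s, a i • v i‖ ^ 2 = ∑ i ∈ s, ∑ j ∈ s, a i * a j * ⟪v i, v j⟫ := by
  rw [← real_inner_self_eq_norm_sq, sum_inner]
  refine Finset.sum_congr rfl fun i _ => ?_
  rw [inner_sum]
  refine Finset.sum_congr rfl fun j _ => ?_
  rw [real_inner_smul_left, real_inner_smul_right, mul_assoc]

theorem squared_loss_pl_inequality_general {F ι : Type*} [NormedAddCommGroup F]
    [InnerProductSpace ℝ F] [CompleteSpace F] {s : Finset ι} {f : ι → F → ℝ} {θ : F}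
    (hf : ∀ i ∈ s, DifferentiableAt ℝ (f i) θ) {y : ι → ℝ} {c : ℝ} {L : F → ℝ}
    (hL : L = fun θ => c * ∑ i ∈ s, (y i - f i θ) ^ 2) {lam0 : ℝ}
    (hNTK : lam0 * ∑ i ∈ s, (y i - f i θ) ^ 2 ≤ ∑ i ∈ s, ∑ j ∈ s,
      (y i - f i θ) * (y j - f j θ) * ⟪gradient (f i) θ, gradient (f j) θ⟫) :
    4 * c * lam0 * L θ ≤ ‖gradient L θ‖ ^ 2 := by
  have hgrad : gradient L θ = (-2 * c) • ∑ i ∈ s, (y i - f i θ) • gradient (f i) θ := by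
    rw [hL]
    exact (hasGradientAt_const_mul_sum_sub_sq (fun i hi => (hf i hi).hasGradientAt) y c).gradient
  calc 4 * c * lam0 * L θ
      = (-2 * c) ^ 2 * (lam0 * ∑ i ∈ s, (y i - f i θ) ^ 2) := by rw [hL]; ring
    _ ≤ (-2 * c) ^ 2 * ∑ i ∈ s, ∑ j ∈ s,
          (y i - f i θ) * (y j - f j θ) * ⟪gradient (f i) θ, gradient (f j) θ⟫ := by gcongr
    _ = ‖gradient L θ‖ ^ 2 := by
      rw [hgrad, norm_smul, mul_pow ‖-2 * c‖, Real.norm_eq_abs, sq_abs, norm_sum_smul_sq]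

/-- **PL inequality for the squared loss from the NTK condition.** If the Gram
(neural tangent kernel) matrix `K(θ)_{ij} = ⟪∇f_i(θ), ∇f_j(θ)⟫` has smallest
eigenvalue at least `lam0 > 0` (stated equivalently via its quadratic form:
`vᵀ K(θ) v ≥ lam0 ‖v‖²` for all `v`), then the empirical squared loss
`L(θ) = (1/(2n)) Σ (y_i - f_i(θ))²` satisfies `‖∇L(θ)‖² ≥ (2lam0/n) L(θ)`. -/
theorem squared_loss_pl_inequality (p n : ℕ) (hp : 1 ≤ p) (hn : 1 ≤ n)
    (f : Fin n → EuclideanSpace ℝ (Fin p) → ℝ)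
    (hf : ∀ i, Differentiable ℝ (f i))
    (y : Fin n → ℝ)
    (L : EuclideanSpace ℝ (Fin p) → ℝ)
    (hL : L = fun θ => (1 / (2 * (n : ℝ))) * ∑ i, (y i - f i θ) ^ 2)
    (θ : EuclideanSpace ℝ (Fin p)) (lam0 : ℝ) (hlam0 : 0 < lam0)
    (hNTK : ∀ v : Fin n → ℝ,
      lam0 * ∑ i, v i ^ 2
        ≤ ∑ i, ∑ j, v i * v j * ⟪gradient (f i) θ, gradient (f j) θ⟫) :
    ‖gradient L θ‖ ^ 2 ≥ (2 * lam0 / (n : ℝ)) * L θ := by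
  have hcoeff : 4 * (1 / (2 * (n : ℝ))) * lam0 = 2 * lam0 / n := by ring
  rw [ge_iff_le, ← hcoeff]
  exact squared_loss_pl_inequality_general (fun i _ => hf i θ) hL (hNTK _)
end
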